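/- arXiv:2512.12804 — 3 statements merged into one kernel-verified Lean document; each statement's English description precedes it below -/
import Mathlib

section
/- In the causal model M with binary endogenous variables X and Y, graph X → Y, P(Y=1 | X=1) = p and P(Y=1 | X=0) = q with 0 < p < q < 1, and P(X=1) > 0: the PO-semantics point-identifies the probability of necessity, namely P^N((Y=0)_{X←0} | X=1, Y=1) = 1 − q. -/
/-!
The PO-SCM of `M2` has three mutually independent exogenous variables: `X` itself in the guise of
its only potential outcome (called `c` below), `Y₁` (called `d`) and `Y₀` (called `e`). A world is
thus a tuple `(x, y, c, d, e)` of truth values, and the joint distribution is carried by the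
worlds with `x = c` and `y = Y_x` (`M2PO.joint_world`). Setting `X ← 0` makes `Y` equal to `Y₀`
with certainty, so at a world of positive exogenous mass `(Y = 0)_{X ← 0}` has probability
`[e = 0]` (`M2PO.cfBasic_world`). Conditioning on `X = Y = 1` amounts to conditioning on
`c = d = 1`, which has probability `px1 * p > 0` and is independent of `Y₀`; hence the answer is
`P(Y₀ = 0) = 1 - q`.
-/

open Finset

noncomputable section

attribute [local instance] Classical.propDecidable

/-- An assignment of values to the variables. -/
abbrev Asg {ν : Type} (Val : ν → Type) : Type := (i : ν) → Val i

/-- A probabilistic causal model (a causal Bayesian network with explicit exogenous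
variables): a signature (variables `ν` with value sets `Val`), a graph given by the
parent map `pa` (with `ord` a witness of acyclicity, and the variables in `exo` being
the roots), and a joint probability distribution that is Markov relative to the graph,
presented by the conditional probability table `cpt i w x = P(i = x | pa i = w|_{pa i})`
of each variable given its parents (for exogenous variables this is the marginal). -/
structure CM (ν : Type) (Val : ν → Type) : Type where
  exo : Finset ν
  pa : ν → Finset ν
  ord : ν → ℕ
  cpt : (i : ν) → Asg Val → Val i → ℝ

/-- A basic counterfactual event `(Y = yv)_{X ← xv}`. -/
structure CFEvent (ν : Type) (Val : ν → Type) : Type where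
  X : Finset ν
  xv : Asg Val
  Y : Finset ν
  yv : Asg Val

namespace CM

variable {ν : Type} {Val : ν → Type}

/-- Well-formedness of a causal model: exogenous variables are roots, the graph is
acyclic, the conditional probability table of each variable depends only on its
parents, and each table is a probability distribution. -/
structure WF [Fintype ν] [∀ i, Fintype (Val i)] (M : CM ν Val) : Prop where
  pa_exo : ∀ i ∈ M.exo, M.pa i = ∅
  acyclic : ∀ i j, j ∈ M.pa i → M.ord j < M.ord i
  cpt_pa : ∀ (i : ν) (w w' : Asg Val) (x : Val i),
    (∀ j ∈ M.pa i, w j = w' j) → M.cpt i w x = M.cpt i w' x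
  cpt_nonneg : ∀ i w x, 0 ≤ M.cpt i w x
  cpt_sum : ∀ i w, ∑ x, M.cpt i w x = 1

variable [Fintype ν] [∀ i, Fintype (Val i)] [∀ i, Nonempty (Val i)]

variable (M : CM ν Val)

/-- The joint distribution `P(U = u, V = v)` (Markov factorization). -/
def joint (w : Asg Val) : ℝ := ∏ i, M.cpt i w (w i)

/-- The interventional distribution `P_{do(X = xv)}` (truncated factorization). -/
def pdo (X : Finset ν) (xv w : Asg Val) : ℝ :=
  if ∀ i ∈ X, w i = xv i then ∏ i ∈ Xᶜ, M.cpt i w (w i) else 0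

/-- `P_{do(X = xv)}(Y = yv | U = u)`, where `u` is the exogenous part of `w`:
the probability of the basic counterfactual `(Y = yv)_{X ← xv}` given the world `w`. -/
def cfBasic (X : Finset ν) (xv : Asg Val) (Y : Finset ν) (yv : Asg Val) (w : Asg Val) : ℝ :=
  (∑ w' : Asg Val,
      if (∀ i ∈ M.exo, w' i = w i) ∧ ∀ i ∈ Y, w' i = yv i then M.pdo X xv w' else 0) /
  (∑ w' : Asg Val, if ∀ i ∈ M.exo, w' i = w i then M.pdo X xv w' else 0)

/-- The probability of a complex counterfactual
`P(y_x, …, z_w) = Σ_{(u,v)} P(y_x | u,v) ⋯ P(z_w | u,v) P(u,v)`. -/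
def cfProb (evs : List (CFEvent ν Val)) : ℝ :=
  ∑ w : Asg Val, (evs.map fun e => M.cfBasic e.X e.xv e.Y e.yv w).prod * M.joint w

/-- Conditional probability of a complex counterfactual given an actual event `Z = zv`:
`P(y_x, …, z_w | Z = zv) = P(y_x, …, z_w, Z = zv) / P(Z = zv)`. -/
def cfProbCond (evs : List (CFEvent ν Val)) (Z : Finset ν) (zv : Asg Val) : ℝ :=
  (∑ w : Asg Val,
      (if ∀ i ∈ Z, w i = zv i then (evs.map fun e => M.cfBasic e.X e.xv e.Y e.yv w).prod
       else 0) * M.joint w) /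
  (∑ w : Asg Val, if ∀ i ∈ Z, w i = zv i then M.joint w else 0)

/-- `M` is a structural causal model: every endogenous variable is a deterministic
function of its parents (the exogenous variables are automatically mutually
independent in this presentation). -/
def IsSCM : Prop :=
  ∀ i ∉ M.exo, ∀ (w : Asg Val) (x : Val i), M.cpt i w x = 0 ∨ M.cpt i w x = 1

/-- The actualized refinement `M^{(u,v)}` of `M` at the actual world `a`:
for each endogenous variable, the conditional distribution given the *actual* values of
its parents is replaced by the point mass at the actual value of the variable. -/
def refine (a : Asg Val) : CM ν Val where
  exo := M.exo
  pa := M.pa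
  ord := M.ord
  cpt := fun i w x =>
    if i ∉ M.exo ∧ ∀ j ∈ M.pa i, w j = a j then (if x = a i then 1 else 0)
    else M.cpt i w x

/-- The B-semantics probability of a basic counterfactual,
`P^B((Y = yv)_{X ← xv} | a) = (P^{a})_{do(X = xv)}(Y = yv | U = u)` where `u` is the
exogenous part of the actual world `a`. -/
def pbBasic (a : Asg Val) (X : Finset ν) (xv : Asg Val) (Y : Finset ν) (yv : Asg Val) : ℝ :=
  (M.refine a).cfBasic X xv Y yv a

/-- The B-semantics probability of a complex counterfactual. -/
def pbProb (evs : List (CFEvent ν Val)) : ℝ :=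
  ∑ w : Asg Val, (evs.map fun e => M.pbBasic w e.X e.xv e.Y e.yv).prod * M.joint w

/-- The conditional B-semantics probability of a complex counterfactual given `Z = zv`. -/
def pbProbCond (evs : List (CFEvent ν Val)) (Z : Finset ν) (zv : Asg Val) : ℝ :=
  (∑ w : Asg Val,
      (if ∀ i ∈ Z, w i = zv i then (evs.map fun e => M.pbBasic w e.X e.xv e.Y e.yv).prod
       else 0) * M.joint w) /
  (∑ w : Asg Val, if ∀ i ∈ Z, w i = zv i then M.joint w else 0)

/-- An assignment of values to the parents of `i`. -/
def PaAsg (i : ν) : Type := (j : {j : ν // j ∈ M.pa i}) → Val j.1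

instance (i : ν) : Fintype (M.PaAsg i) := by unfold PaAsg; infer_instance
instance (i : ν) : Nonempty (M.PaAsg i) := ⟨fun j => Classical.arbitrary (Val j.1)⟩

/-- Extend an assignment of the parents of `i` to a full assignment (arbitrarily). -/
def extendPa (i : ν) (κ : M.PaAsg i) : Asg Val :=
  fun j => if h : j ∈ M.pa i then κ ⟨j, h⟩ else Classical.arbitrary (Val j)

/-- The index type of the potential outcome variables `X_{pa_X}` of the PO-SCM:
one for each endogenous variable `X` and each value `pa_X` of its parents. -/
def POI : Type := Σ i : {i : ν // i ∉ M.exo}, M.PaAsg i.1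

instance : Fintype (POI M) := by unfold POI; infer_instance

/-- The value set of the potential outcome variable `X_{pa_X}` is that of `X`. -/
def POB : POI M → Type := fun p => Val p.1.1

instance (p : POI M) : Fintype (POB M p) := by unfold POB; infer_instance
instance (p : POI M) : Nonempty (POB M p) := by unfold POB; infer_instance

/-- The type of values of the response variable `U_X` of the canonical frame:
functions from values of the parents of `X` to values of `X`. -/
def RType (i : ν) : Type := M.PaAsg i → Val i

instance (i : ν) : Fintype (M.RType i) := by unfold RType; infer_instance
instance (i : ν) : Nonempty (M.RType i) := ⟨fun _ => Classical.arbitrary (Val i)⟩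

/-- The index type of the response variables of the canonical frame:
one for each endogenous variable. -/
def RVI : Type := {i : ν // i ∉ M.exo}

instance : Fintype (RVI M) := by unfold RVI; infer_instance

/-- The value set of the response variable `U_X`. -/
def RB : RVI M → Type := fun p => M.RType p.1

instance (p : RVI M) : Fintype (RB M p) := by unfold RB; infer_instance
instance (p : RVI M) : Nonempty (RB M p) := by unfold RB; infer_instance

end CM

/-- The family of value sets of an extended signature `ν ⊕ β`. -/
def SumVal {ν β : Type} (Val : ν → Type) (B : β → Type) : ν ⊕ β → Type := fun i =>
  match i with
  | .inl j => Val j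
  | .inr b => B b

section SumValInst

variable {ν β : Type} {Val : ν → Type} {B : β → Type}

instance [∀ i, Fintype (Val i)] [∀ b, Fintype (B b)] (i : ν ⊕ β) :
    Fintype (SumVal Val B i) := by
  cases i with
  | inl j => exact inferInstanceAs (Fintype (Val j))
  | inr b => exact inferInstanceAs (Fintype (B b))

instance [∀ i, Nonempty (Val i)] [∀ b, Nonempty (B b)] (i : ν ⊕ β) :
    Nonempty (SumVal Val B i) := by
  cases i with
  | inl j => exact inferInstanceAs (Nonempty (Val j))
  | inr b => exact inferInstanceAs (Nonempty (B b))

/-- Lift an assignment on `ν` to one on `ν ⊕ β` (arbitrary on the new variables). -/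
def liftAsg [∀ b, Nonempty (B b)] (xv : Asg Val) : Asg (SumVal Val B) := fun i =>
  match i with
  | .inl j => xv j
  | .inr b => Classical.arbitrary (B b)

/-- Lift a counterfactual event on the original variables to the extended signature. -/
def liftCFEvent [∀ b, Nonempty (B b)] (e : CFEvent ν Val) : CFEvent (ν ⊕ β) (SumVal Val B) :=
  ⟨e.X.image Sum.inl, liftAsg e.xv, e.Y.image Sum.inl, liftAsg e.yv⟩

variable [Fintype ν] [Fintype β] [∀ i, Fintype (Val i)] [∀ b, Fintype (B b)]
  [∀ i, Nonempty (Val i)] [∀ b, Nonempty (B b)]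

/-- The probability, computed in a model `N` over an extended signature, of a complex
counterfactual over the original variables. -/
def extProb (N : CM (ν ⊕ β) (SumVal Val B)) (evs : List (CFEvent ν Val)) : ℝ :=
  N.cfProb (evs.map liftCFEvent)

/-- The probability, computed in a model `N` over an extended signature, of a complex
counterfactual over the original variables, conditional on an actual event `Z = zv`
over the original variables. -/
def extProbCond (N : CM (ν ⊕ β) (SumVal Val B)) (evs : List (CFEvent ν Val))
    (Z : Finset ν) (zv : Asg Val) : ℝ :=
  N.cfProbCond (evs.map liftCFEvent) (Z.image Sum.inl) (liftAsg zv)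

/-- The probability, computed in a model `N` over an extended signature, of a basic
counterfactual conditional on the values `a` of *all* the original variables
(marginalizing over the added exogenous variables), via the law of total probability. -/
def extBasicCond (N : CM (ν ⊕ β) (SumVal Val B)) (a : Asg Val)
    (X : Finset ν) (xv : Asg Val) (Y : Finset ν) (yv : Asg Val) : ℝ :=
  (∑ w : Asg (SumVal Val B),
      if ∀ i : ν, w (Sum.inl i) = a i then
        N.cfBasic (X.image Sum.inl) (liftAsg xv) (Y.image Sum.inl) (liftAsg yv) w * N.joint w
      else 0) /
  (∑ w : Asg (SumVal Val B), if ∀ i : ν, w (Sum.inl i) = a i then N.joint w else 0)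

end SumValInst

namespace CM

variable {ν : Type} {Val : ν → Type} [Fintype ν] [∀ i, Fintype (Val i)] [∀ i, Nonempty (Val i)]
variable (M : CM ν Val)

/-- The PO-SCM `M^N` of `M`: the structural causal model obtained from `M` by adding,
for each endogenous variable `X` and each value `pa_X` of its parents, an exogenous
potential outcome variable `X_{pa_X}` (with marginal `P_M(X | Pa_X = pa_X)`, all
exogenous variables mutually independent), and the structural equation
`X = X_{pa_X}` whenever `Pa_X = pa_X`. -/
def MN : CM (ν ⊕ POI M) (SumVal Val (POB M)) where
  exo := (M.exo.image Sum.inl) ∪ (univ.image Sum.inr)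
  pa := fun i =>
    match i with
    | .inl j => ((M.pa j).image Sum.inl) ∪
        ((univ.filter fun p : POI M => p.1.1 = j).image Sum.inr)
    | .inr _ => ∅
  ord := fun i =>
    match i with
    | .inl j => M.ord j + 1
    | .inr _ => 0
  cpt := fun i =>
    match i with
    | .inl j => fun w x =>
        if h : j ∈ M.exo then M.cpt j (fun k => w (Sum.inl k)) x
        else if x = w (Sum.inr ⟨⟨j, h⟩, fun k => w (Sum.inl k.1)⟩) then 1 else 0
    | .inr p => fun _ x => M.cpt p.1.1 (M.extendPa p.1.1 p.2) x

/-- `P^N(y_x, …, z_w)`: the probability of a complex counterfactual computed in the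
PO-SCM `M^N`. -/
def pnProb (evs : List (CFEvent ν Val)) : ℝ := extProb M.MN evs

/-- `P^N(y_x, …, z_w | Z = zv)`: the conditional probability of a complex
counterfactual computed in the PO-SCM `M^N`, given an actual event on the
endogenous variables. -/
def pnProbCond (evs : List (CFEvent ν Val)) (Z : Finset ν) (zv : Asg Val) : ℝ :=
  extProbCond M.MN evs Z zv

/-- `P^N((Y = yv)_{X ← xv} | U = u, V = v)`: the probability of a basic counterfactual
computed in the PO-SCM `M^N`, conditional on the exogenous and endogenous variables of
`M` only (marginalizing over the potential outcome variables). -/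
def pnBasicCond (a : Asg Val) (X : Finset ν) (xv : Asg Val) (Y : Finset ν) (yv : Asg Val) : ℝ :=
  extBasicCond M.MN a X xv Y yv

/-- A canonical SCM for `M`, determined by a distribution `q` of the response variables:
the SCM over the canonical frame, which adds for each endogenous variable `X` an
exogenous response variable `U_X` ranging over the functions `f_X : R(Pa_X) → R(X)`,
with the structural equation `X = f_X(Pa_X)` where `f_X` is the value of `U_X`. -/
def canonSCM (q : (p : RVI M) → RType M p.1 → ℝ) : CM (ν ⊕ RVI M) (SumVal Val (RB M)) where
  exo := (M.exo.image Sum.inl) ∪ (univ.image Sum.inr)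
  pa := fun i =>
    match i with
    | .inl j => ((M.pa j).image Sum.inl) ∪
        ((univ.filter fun p : RVI M => p.1 = j).image Sum.inr)
    | .inr _ => ∅
  ord := fun i =>
    match i with
    | .inl j => M.ord j + 1
    | .inr _ => 0
  cpt := fun i =>
    match i with
    | .inl j => fun w x =>
        if h : j ∈ M.exo then M.cpt j (fun k => w (Sum.inl k)) x
        else if x = w (Sum.inr ⟨j, h⟩) (fun k => w (Sum.inl k.1)) then 1 else 0
    | .inr p => fun _ x => q p x

/-- `q` is the distribution of the response variables of a canonical SCM for `M`:
it is a probability distribution (the response variables being mutually independent and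
independent of the exogenous variables of `M`, whose distribution is kept), and it
reproduces the conditional probability tables of `M`:
`P_M(X = x | Pa_X = pa_X) = Σ_{f_X with f_X(pa_X) = x} P(U_X = f_X)`. -/
def IsCanonicalDist (q : (p : RVI M) → RType M p.1 → ℝ) : Prop :=
  (∀ p x, 0 ≤ q p x) ∧ (∀ p, ∑ f, q p f = 1) ∧
  ∀ (p : RVI M) (κ : M.PaAsg p.1) (x : Val p.1),
    M.cpt p.1 (M.extendPa p.1 κ) x = ∑ f ∈ univ.filter (fun f : RType M p.1 => f κ = x), q p f

/-- The distribution of the response variables of the GH-SCM: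
`P(U_X = f_X) = ∏_{pa_X} P_M(X = f_X(pa_X) | Pa_X = pa_X)`. -/
def qGH : (p : RVI M) → RType M p.1 → ℝ := fun p f =>
  ∏ κ : M.PaAsg p.1, M.cpt p.1 (M.extendPa p.1 κ) (f κ)

end CM

/-- A default assignment. -/
def dfltAsg {ν : Type} (Val : ν → Type) [∀ i, Nonempty (Val i)] : Asg Val :=
  fun i => Classical.arbitrary (Val i)

/-- The causal model of Example 4: binary endogenous variables `X` (index `false`) and
`Y` (index `true`) with graph `X → Y`, `P(X=1) = px1`, `P(Y=1 | X=1) = p` and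
`P(Y=1 | X=0) = q` (the exogenous variables determining `X` are left implicit:
`X` has no parents). Values: `true` is `1`, `false` is `0`. -/
def M2 (p q px1 : ℝ) : CM Bool (fun _ => Bool) where
  exo := ∅
  pa := fun i => match i with
    | false => ∅
    | true => {false}
  ord := fun i => match i with
    | false => 0
    | true => 1
  cpt := fun i => match i with
    | false => fun _ b => if b then px1 else 1 - px1
    | true => fun w b =>
        if w false then (if b then p else 1 - p) else (if b then q else 1 - q)

namespace M2PO

/-- The index of a potential outcome variable of `M2`: `none` is the (parentless) variable
`X`, and `some b` is `Y_b`, the outcome of `Y` when its parent `X` is set to `b`. -/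
def idx (p q px1 : ℝ) : Option Bool → CM.POI (M2 p q px1)
  | none => ⟨⟨false, Finset.notMem_empty _⟩, fun _ => false⟩
  | some b => ⟨⟨true, Finset.notMem_empty _⟩, fun _ => b⟩

lemma idx_bijective (p q px1 : ℝ) : Function.Bijective (idx p q px1) := by
  constructor
  · rintro (_ | a) (_ | b) h
    · rfl
    · simp [idx] at h
      exact absurd (congrArg (fun i => i.1.1) h) (by simp)
    · simp [idx] at h
      exact absurd (congrArg (fun i => i.1.1) h) (by simp)
    · have h' := eq_of_heq (Sigma.mk.inj h).2
      have := congrFun h' ⟨false, by simp [M2]⟩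
      simpa using this
  · rintro ⟨⟨i, hi⟩, κ⟩
    cases i
    · refine ⟨none, ?_⟩
      refine Sigma.ext rfl (heq_of_eq ?_)
      funext ⟨j, hj⟩
      exact absurd hj (Finset.notMem_empty j)
    · refine ⟨some (κ ⟨false, by simp [M2]⟩), ?_⟩
      refine Sigma.ext rfl (heq_of_eq ?_)
      funext ⟨j, hj⟩
      have : j = false := Finset.mem_singleton.1 hj
      subst this
      rfl

/-- The world of the PO-SCM of `M2` in which `X`, `Y`, the potential outcome
variable of `X`, `Y₁` and `Y₀` take the values listed in `t`, in this order. -/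
def world (p q px1 : ℝ) (t : Bool × Bool × Bool × Bool × Bool) :
    Asg (SumVal (fun _ : Bool => Bool) (CM.POB (M2 p q px1)))
  | .inl false => t.1
  | .inl true => t.2.1
  | .inr ⟨⟨false, _⟩, _⟩ => t.2.2.1
  | .inr ⟨⟨true, _⟩, κ⟩ =>
      bif κ ⟨false, Finset.mem_singleton_self _⟩ then t.2.2.2.1 else t.2.2.2.2

lemma world_bijective (p q px1 : ℝ) : Function.Bijective (world p q px1) := by
  constructor
  · rintro ⟨a, b, c, d, e⟩ ⟨a', b', c', d', e'⟩ h
    have h1 : a = a' := congrFun h (.inl false)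
    have h2 : b = b' := congrFun h (.inl true)
    have h3 : c = c' := congrFun h (.inr (idx p q px1 none))
    have h4 : d = d' := congrFun h (.inr (idx p q px1 (some true)))
    have h5 : e = e' := congrFun h (.inr (idx p q px1 (some false)))
    subst h1 h2 h3 h4 h5
    rfl
  · intro w
    refine ⟨⟨w (.inl false), w (.inl true), w (.inr (idx p q px1 none)),
      w (.inr (idx p q px1 (some true))), w (.inr (idx p q px1 (some false)))⟩, ?_⟩
    funext i
    rcases i with (_ | _) | i
    · rfl
    · rfl
    · obtain ⟨(_ | _ | _), rfl⟩ := (idx_bijective p q px1).2 i <;> rfl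

/-- The `Fintype` instance is arbitrary, since the one in the definitions of `CM` is assembled
with classical decidable equality. -/
lemma sum_world (p q px1 : ℝ)
    [Fintype (Asg (SumVal (fun _ : Bool => Bool) (CM.POB (M2 p q px1))))]
    (F : Asg (SumVal (fun _ : Bool => Bool) (CM.POB (M2 p q px1))) → ℝ) :
    ∑ w, F w = ∑ a : Bool, ∑ b : Bool, ∑ c : Bool, ∑ d : Bool, ∑ e : Bool,
      F (world p q px1 (a, b, c, d, e)) := by
  rw [← (world_bijective p q px1).sum_comp]
  simp only [Fintype.sum_prod_type]

lemma prod_idx (p q px1 : ℝ) (F : Bool ⊕ CM.POI (M2 p q px1) → ℝ) :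
    ∏ i, F i = F (.inl false) * F (.inl true) * (F (.inr (idx p q px1 none)) *
      (F (.inr (idx p q px1 (some true))) * F (.inr (idx p q px1 (some false))))) := by
  rw [Fintype.prod_sum_type, ← (idx_bijective p q px1).prod_comp]
  simp [Fintype.prod_option, mul_comm]

lemma prod_ne_X (p q px1 : ℝ) (s : Finset (Bool ⊕ CM.POI (M2 p q px1)))
    (hs : ∀ i, i ∈ s ↔ i ≠ .inl false) (F : Bool ⊕ CM.POI (M2 p q px1) → ℝ) :
    ∏ i ∈ s, F i = F (.inl true) * (F (.inr (idx p q px1 none)) *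
      (F (.inr (idx p q px1 (some true))) * F (.inr (idx p q px1 (some false))))) := by
  have h : s = Finset.univ.filter (fun i => i ≠ Sum.inl false) := by
    ext i
    simp [hs]
  rw [h, Finset.prod_filter, prod_idx]
  simp

/-- The mass function of a binary variable taking the value `true` with probability `r`. -/
def bern (r : ℝ) (b : Bool) : ℝ := if b then r else 1 - r

lemma cpt_X (p q px1 : ℝ) (a b c d e : Bool) :
    (M2 p q px1).MN.cpt (.inl false) (world p q px1 (a, b, c, d, e))
      (world p q px1 (a, b, c, d, e) (.inl false)) = if a = c then 1 else 0 := by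
  have h : false ∉ (M2 p q px1).exo := Finset.notMem_empty _
  simp only [CM.MN, dif_neg h]
  exact if_congr Iff.rfl rfl rfl

lemma cpt_Y (p q px1 : ℝ) (a b c d e : Bool) :
    (M2 p q px1).MN.cpt (.inl true) (world p q px1 (a, b, c, d, e))
      (world p q px1 (a, b, c, d, e) (.inl true)) =
        if b = (bif a then d else e) then 1 else 0 := by
  have h : true ∉ (M2 p q px1).exo := Finset.notMem_empty _
  simp only [CM.MN, dif_neg h]
  exact if_congr Iff.rfl rfl rfl

lemma cpt_PO_X (p q px1 : ℝ) (a b c d e : Bool) :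
    (M2 p q px1).MN.cpt (.inr (idx p q px1 none)) (world p q px1 (a, b, c, d, e))
      (world p q px1 (a, b, c, d, e) (.inr (idx p q px1 none))) = bern px1 c := rfl

lemma cpt_PO_Y1 (p q px1 : ℝ) (a b c d e : Bool) :
    (M2 p q px1).MN.cpt (.inr (idx p q px1 (some true))) (world p q px1 (a, b, c, d, e))
      (world p q px1 (a, b, c, d, e) (.inr (idx p q px1 (some true)))) = bern p d := by
  have h : (M2 p q px1).extendPa true (fun _ => true) false = true :=
    dif_pos (Finset.mem_singleton_self _)
  change (if (M2 p q px1).extendPa true (fun _ => true) false then bern p d else bern q d) = _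
  rw [h]
  rfl

lemma cpt_PO_Y0 (p q px1 : ℝ) (a b c d e : Bool) :
    (M2 p q px1).MN.cpt (.inr (idx p q px1 (some false))) (world p q px1 (a, b, c, d, e))
      (world p q px1 (a, b, c, d, e) (.inr (idx p q px1 (some false)))) = bern q e := by
  have h : (M2 p q px1).extendPa true (fun _ => false) false = false :=
    dif_pos (Finset.mem_singleton_self _)
  change (if (M2 p q px1).extendPa true (fun _ => false) false then bern p e else bern q e) = _
  rw [h]
  rfl

lemma joint_world (p q px1 : ℝ) (a b c d e : Bool) :
    (M2 p q px1).MN.joint (world p q px1 (a, b, c, d, e)) =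
      (if a = c then 1 else 0) * (if b = (bif a then d else e) then 1 else 0) *
        (bern px1 c * (bern p d * bern q e)) := by
  rw [CM.joint, prod_idx, cpt_X, cpt_Y, cpt_PO_X, cpt_PO_Y1, cpt_PO_Y0]

/-- Under `X ← 0` the equation for `X` is dropped, so the value `c` of its potential outcome
variable no longer constrains `X`. -/
lemma pdo_world (p q px1 : ℝ) (a b c d e : Bool) :
    (M2 p q px1).MN.pdo {Sum.inl false} (liftAsg fun _ => false)
        (world p q px1 (a, b, c, d, e)) =
      if a = false then (if b = (bif a then d else e) then 1 else 0) *
        (bern px1 c * (bern p d * bern q e)) else 0 := by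
  have hc : (∀ i ∈ ({Sum.inl false} : Finset (Bool ⊕ CM.POI (M2 p q px1))),
      world p q px1 (a, b, c, d, e) i = liftAsg (fun _ => false) i) ↔ a = false := by
    simp only [Finset.mem_singleton, forall_eq]
    rfl
  simp only [CM.pdo, hc]
  rw [prod_ne_X _ _ _ _ (by intro i; simp), cpt_Y, cpt_PO_X, cpt_PO_Y1, cpt_PO_Y0]

/-- The exogenous part of a world consists of its three potential outcome values. -/
lemma exo_iff (p q px1 : ℝ) (a b c d e a' b' c' d' e' : Bool) :
    (∀ i ∈ (M2 p q px1).MN.exo,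
      world p q px1 (a', b', c', d', e') i = world p q px1 (a, b, c, d, e) i) ↔
      c' = c ∧ d' = d ∧ e' = e := by
  have hexo : ∀ i, i ∈ (M2 p q px1).MN.exo ↔ ∃ k, i = Sum.inr (idx p q px1 k) := by
    intro i
    have h0 : (M2 p q px1).exo = ∅ := rfl
    simp only [CM.MN, h0, Finset.image_empty, Finset.empty_union, Finset.mem_image,
      Finset.mem_univ, true_and]
    constructor
    · rintro ⟨j, rfl⟩
      obtain ⟨k, rfl⟩ := (idx_bijective p q px1).2 j
      exact ⟨k, rfl⟩
    · rintro ⟨k, rfl⟩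
      exact ⟨_, rfl⟩
  constructor
  · intro h
    exact ⟨h _ ((hexo _).2 ⟨none, rfl⟩), h _ ((hexo _).2 ⟨some true, rfl⟩),
      h _ ((hexo _).2 ⟨some false, rfl⟩)⟩
  · rintro ⟨rfl, rfl, rfl⟩ i hi
    obtain ⟨(_ | _ | _), rfl⟩ := (hexo i).1 hi <;> rfl

/-- Given the exogenous variables, `Y` under `X ← 0` equals `Y₀`. The hypothesis that the exogenous
setting has nonzero mass keeps the conditional probability from being `0 / 0`. -/
lemma cfBasic_world (p q px1 : ℝ) (a b c d e : Bool)
    (h : bern px1 c * (bern p d * bern q e) ≠ 0) :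
    (M2 p q px1).MN.cfBasic {Sum.inl false} (liftAsg fun _ => false)
        {Sum.inl true} (liftAsg fun _ => false)
        (world p q px1 (a, b, c, d, e)) = if e = false then 1 else 0 := by
  have hY : ∀ a b c d e : Bool,
      (∀ i ∈ ({Sum.inl true} : Finset (Bool ⊕ CM.POI (M2 p q px1))),
      world p q px1 (a, b, c, d, e) i = liftAsg (fun _ => false) i) ↔ b = false := by
    intro a b c d e
    simp only [Finset.mem_singleton, forall_eq]
    rfl
  rw [CM.cfBasic, sum_world, sum_world]
  simp only [pdo_world, exo_iff, hY]
  cases c <;> cases d <;> cases e <;> simp [h]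

/-- The event `X = 1, Y = 1`, for whichever decidable equality is used to form the image. -/
lemma Z_iff (p q px1 : ℝ) [DecidableEq (Bool ⊕ CM.POI (M2 p q px1))]
    (a b c d e : Bool) :
    (∀ i ∈ ({false, true} : Finset Bool).image (Sum.inl (β := CM.POI (M2 p q px1))),
      world p q px1 (a, b, c, d, e) i = liftAsg (fun _ => true) i) ↔ a = true ∧ b = true := by
  simp only [Finset.image_insert, Finset.image_singleton, Finset.mem_insert,
    Finset.mem_singleton, forall_eq_or_imp, forall_eq]
  rfl

end M2PO

/-- In the model `M2` (with `0 < p < q < 1` and `P(X=1) > 0`), the PO-semantics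
point-identifies the probability of necessity:
`P^N((Y=0)_{X←0} | X=1, Y=1) = 1 − q`. -/
theorem pn_point_identifies_PN (p q px1 : ℝ) (hp : 0 < p) (hpq : p < q) (hq : q < 1)
    (hpx0 : 0 < px1) (hpx1 : px1 ≤ 1) :
    (M2 p q px1).pnProbCond
        [⟨{false}, fun _ => false, {true}, fun _ => false⟩]
        {false, true} (fun _ => true)
      = 1 - q := by
  have hp0 : M2PO.bern p true ≠ 0 := hp.ne'
  have hx0 : M2PO.bern px1 true ≠ 0 := hpx0.ne'
  have hq1 : M2PO.bern q true ≠ 0 := (hp.trans hpq).ne'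
  have hq0 : M2PO.bern q false ≠ 0 := by simpa [M2PO.bern] using (sub_pos.2 hq).ne'
  have hc := fun e => M2PO.cfBasic_world p q px1 true true true true e
    (mul_ne_zero hx0 (mul_ne_zero hp0 (by cases e <;> assumption)))
  rw [CM.pnProbCond, extProbCond, CM.cfProbCond, M2PO.sum_world, M2PO.sum_world]
  simp only [M2PO.Z_iff, M2PO.joint_world, List.map_cons, List.map_nil, List.prod_cons,
    List.prod_nil, liftCFEvent, Finset.image_singleton, Fintype.sum_bool]
  simp [M2PO.bern, hc]
  have := hp.ne'
  have := hpx0.ne'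
  field_simp
  ring

end
end

section
/- Coarsening the exogenous variable of a deterministic model yields an irreducibly nondeterministic conditional distribution: let U be a finite set, P a probability distribution on U with P(u) > 0 for all u ∈ U, f : U → Y_vals a surjective function onto a finite set Y_vals with |Y_vals| > 2, u' ∈ U, and y₂ ∈ Y_vals with y₂ ≠ f(u'). Then P(U ≠ u') > 0 and 0 < P(f(U) = y₂ | U ≠ u') < 1. (Hence in the coarsened model with binary exogenous variable Z = 1{U = u'}, the conditional probability P(Y = y₂ | Z = 0) is strictly between 0 and 1, so the coarsened causal model is not a structural causal model.) -/
/-!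
Since `|Yv| > 2`, there is a value `y₃` different from both `y₂` and `f u'`. Preimages of `y₂` and
`y₃` are both different from `u'`. The first makes the numerator positive; the second has positive
mass in the event `U ≠ u'` but not in `f(U) = y₂`, so the numerator is strictly below the
denominator.
-/

open Finset

/-- Coarsening the exogenous variable of a deterministic model yields an irreducibly
nondeterministic conditional distribution: let `U` be a finite set, `P` a probability
distribution on `U` with `P(u) > 0` for all `u ∈ U`, `f : U → Y_vals` a surjective
function onto a finite set `Y_vals` with `|Y_vals| > 2`, `u' ∈ U`, and `y₂ ∈ Y_vals`
with `y₂ ≠ f(u')`. Then `P(U ≠ u') > 0` and `0 < P(f(U) = y₂ | U ≠ u') < 1`.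
(Hence, in the coarsened model with binary exogenous variable `Z = 1{U = u'}`, the
conditional probability `P(Y = y₂ | Z = 0)` is strictly between `0` and `1`, so the
coarsened causal model is not a structural causal model.) -/
theorem coarsening_yields_nondeterminism
    {U Yv : Type} [Fintype U] [DecidableEq U] [Fintype Yv] [DecidableEq Yv]
    (P : U → ℝ) (hpos : ∀ u, 0 < P u) (hsum : ∑ u, P u = 1)
    (f : U → Yv) (hsurj : Function.Surjective f) (hcard : 2 < Fintype.card Yv)
    (u' : U) (y₂ : Yv) (hy : y₂ ≠ f u') :
    (0 < ∑ u ∈ univ.filter (fun u => u ≠ u'), P u) ∧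
    0 < (∑ u ∈ univ.filter (fun u => f u = y₂ ∧ u ≠ u'), P u) /
        (∑ u ∈ univ.filter (fun u => u ≠ u'), P u) ∧
    (∑ u ∈ univ.filter (fun u => f u = y₂ ∧ u ≠ u'), P u) /
        (∑ u ∈ univ.filter (fun u => u ≠ u'), P u) < 1 := by
  obtain ⟨y₃, hy₃⟩ : ∃ y₃, y₃ ∉ ({y₂, f u'} : Finset Yv) := by
    by_contra! h
    have h1 : Fintype.card Yv ≤ ({y₂, f u'} : Finset Yv).card :=
      Finset.card_le_card fun y _ => h y
    have h2 := Finset.card_le_two (a := y₂) (b := f u')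
    omega
  simp only [mem_insert, mem_singleton, not_or] at hy₃
  obtain ⟨u₂, hu₂⟩ := hsurj y₂
  obtain ⟨u₃, hu₃⟩ := hsurj y₃
  have hne₂ : u₂ ≠ u' := by rintro rfl; exact hy hu₂.symm
  have hne₃ : u₃ ≠ u' := by rintro rfl; exact hy₃.2 hu₃.symm
  have hnum : 0 < ∑ u ∈ univ.filter (fun u => f u = y₂ ∧ u ≠ u'), P u :=
    sum_pos (fun u _ => hpos u) ⟨u₂, by simp [hu₂, hne₂]⟩
  have hlt : ∑ u ∈ univ.filter (fun u => f u = y₂ ∧ u ≠ u'), P u <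
      ∑ u ∈ univ.filter (fun u => u ≠ u'), P u := by
    refine sum_lt_sum_of_subset (i := u₃) ?_ ?_ ?_ (hpos u₃) fun u _ _ => (hpos u).le
    · intro u hu
      simp only [mem_filter, mem_univ, true_and] at hu ⊢
      exact hu.2
    · simp [hne₃]
    · simp [hu₃, hy₃.1]
  have hden := hnum.trans hlt
  exact ⟨hden, div_pos hnum hden, (div_lt_one hden).2 hlt⟩
end

section
/- For every causal model M, all Y, X, …, Z, W ⊆ V, all values y, x, …, z, w, all (u, v) with P_M(u, v) > 0, and all z' ∈ R(Z') for Z' ⊆ V with P_M(z') > 0: (i) P^GH(y_x, …, z_w) = P^N(y_x, …, z_w) = P^IC(y_x, …, z_w); (ii) P^B(y_x | u, v) = P^GH(y_x | u, v) = P^N(y_x | u, v) = P^IC(y_x | u, v); (iii) P^B(y_x | z') = P^GH(y_x | z') = P^N(y_x | z') = P^IC(y_x | z'); and (iv) for any binary X, Y ∈ V, PN^B = PN^GH = PN^N = PN^IC, PS^B = PS^GH = PS^N = PS^IC, and PNS^B = PNS^GH = PNS^N = PNS^IC. -/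
/-!
All the semantics are averages over one and the same probability space: pairs `(a, f)` of a
world `a` and a profile `f` of response functions, one for each endogenous variable, where the
weight `CM.worldP a f` is the probability of the exogenous part of `a`, times the product over
all variables and all parent settings of `P(X = f_X(pa_X) | pa_X)`, times the indicator that `f`
generates `a`. By acyclicity the equations given by `f` have exactly one solution under any
intervention (`CM.existsUnique_isSol`), so a basic counterfactual has a truth value
`CM.solVal` at `(a, f)`.

The exogenous variables added in the PO-SCM and in the GH-SCM both amount to a response profile
with this law (for the PO-SCM by currying, `CM.poEquiv`). `CM.RespExt` isolates what the two
have in common, and `CM.RespExt.sum_cf` expresses every quantity of such a model as an average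
of the `solVal`. Thus GH and N agree, and the independent canonical SCM is the GH-SCM itself.

For the B-semantics, the response functions remain independent after conditioning on `f`
generating `a`, which only fixes the value of each `f_X` at the actual parent setting; at all
other settings the law is unchanged. This is precisely the actualized refinement
(`CM.sum_qGH_two`), whence `CM.pbBasic_mul_joint`: the B-probability given `a` is the average
of `solVal` over the profiles generating `a`. For `PNS`, a joint counterfactual, the product rule
of the B-semantics is harmless because `X` is binary: one of the two antecedents is actual, and
by consistency that factor is constant over the profiles generating `a`.
-/

open Finset

noncomputable section

attribute [local instance] Classical.propDecidable

set_option linter.unusedSectionVars false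

namespace CM

/-! ### Indicators and sums of products -/

/-- The real-valued indicator of a proposition. -/
def ind (p : Prop) : ℝ := if p then 1 else 0

lemma ind_true {p : Prop} (h : p) : ind p = 1 := by simp [ind, h]

lemma ind_false {p : Prop} (h : ¬ p) : ind p = 0 := by simp [ind, h]

lemma ind_nonneg (p : Prop) : 0 ≤ ind p := by unfold ind; split_ifs <;> norm_num

lemma ind_and (p q : Prop) : ind (p ∧ q) = ind p * ind q := by
  by_cases hp : p <;> by_cases hq : q <;> simp [ind, hp, hq]

lemma ind_forall {ι : Type} [Fintype ι] (p : ι → Prop) : ind (∀ i, p i) = ∏ i, ind (p i) := by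
  by_cases h : ∀ i, p i
  · rw [ind_true h, Finset.prod_eq_one]
    intro i _
    exact ind_true (h i)
  · rw [ind_false h]
    push Not at h
    obtain ⟨i, hi⟩ := h
    exact (Finset.prod_eq_zero (Finset.mem_univ i) (ind_false hi)).symm

lemma ind_imp (p q : Prop) : ind (p → q) = if p then ind q else 1 := by
  by_cases hp : p <;> by_cases hq : q <;> simp [ind, hp, hq]

lemma ite_eq_ind (p : Prop) [Decidable p] (x : ℝ) : (if p then x else 0) = ind p * x := by
  by_cases hp : p <;> simp [ind, hp]

lemma sum_pi_prod {ι : Type} [Fintype ι] {A : ι → Type} [∀ i, Fintype (A i)]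
    [Fintype (∀ i, A i)] (g : ∀ i, A i → ℝ) :
    ∑ f : ∀ i, A i, ∏ i, g i (f i) = ∏ i, ∑ x, g i x := by
  classical
  rw [Finset.prod_univ_sum]
  refine Finset.sum_congr ?_ (fun _ _ => rfl)
  ext f
  simp

/-- Marginal of a product of independent coordinates at one coordinate. -/
lemma sum_marg_one {κ A : Type} [Fintype κ] [Fintype A] [Fintype (κ → A)] (c : κ → A → ℝ)
    (hc : ∀ k, ∑ x, c k x = 1) (k₁ : κ) (x₁ : A) :
    ∑ f : κ → A, (∏ k, c k (f k)) * ind (x₁ = f k₁) = c k₁ x₁ := by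
  classical
  have h : ∀ f : κ → A, (∏ k, c k (f k)) * ind (x₁ = f k₁) =
      ∏ k, c k (f k) * ind (k = k₁ → x₁ = f k) := by
    intro f
    rw [Finset.prod_mul_distrib, ← ind_forall]
    simp
  simp only [h]
  rw [sum_pi_prod (fun k x => c k x * ind (k = k₁ → x₁ = x)), Finset.prod_eq_single k₁]
  · simp [ind]
  · intro k _ hk
    simp [hk, ind, hc]
  · simp

/-- Joint marginal of a product of independent coordinates at two (possibly equal)
coordinates. -/
lemma sum_marg_two {κ A : Type} [Fintype κ] [Fintype A] [Fintype (κ → A)] (c : κ → A → ℝ)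
    (hc : ∀ k, ∑ x, c k x = 1) (k₁ k₂ : κ) (x₁ x₂ : A) :
    ∑ f : κ → A, (∏ k, c k (f k)) * ind (x₁ = f k₁) * ind (x₂ = f k₂) =
      c k₁ x₁ * if k₂ = k₁ then ind (x₂ = x₁) else c k₂ x₂ := by
  classical
  by_cases hk : k₂ = k₁
  · subst hk
    rw [if_pos rfl, ← sum_marg_one c hc k₂ x₁, Finset.sum_mul]
    refine Finset.sum_congr rfl fun f _ => ?_
    by_cases hx : x₁ = f k₂
    · rw [hx]
    · simp [ind_false hx]
  · have h : ∀ f : κ → A, (∏ k, c k (f k)) * ind (x₁ = f k₁) * ind (x₂ = f k₂) =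
        ∏ k, c k (f k) * ind (k = k₁ → x₁ = f k) * ind (k = k₂ → x₂ = f k) := by
      intro f
      rw [Finset.prod_mul_distrib, Finset.prod_mul_distrib, ← ind_forall, ← ind_forall]
      simp
    simp only [h]
    rw [sum_pi_prod (fun k x => c k x * ind (k = k₁ → x₁ = x) * ind (k = k₂ → x₂ = x)),
      Finset.prod_eq_mul k₁ k₂ (Ne.symm hk)]
    · simp [ind, hk, Ne.symm hk]
    · rintro k _ ⟨h1, h2⟩
      simp [h1, h2, ind, hc]
    · simp
    · simp

variable {ν : Type} {Val : ν → Type} [Fintype ν] [∀ i, Fintype (Val i)] [∀ i, Nonempty (Val i)]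
variable (M : CM ν Val)

/-! ### Response profiles and solutions -/

/-- A profile of response functions, one for each endogenous variable. -/
abbrev Resp : Type := (p : RVI M) → RType M p.1

/-- The restriction of an assignment to the parents of `i`. -/
def rs (w : Asg Val) (i : ν) : M.PaAsg i := fun k => w k.1

/-- `w` solves the structural equations given by the response profile `f` under the
intervention `X ← xv`, with exogenous part taken from `a`. -/
def IsSol (f : M.Resp) (X : Finset ν) (xv a w : Asg Val) : Prop :=
  (∀ i ∈ M.exo, w i = a i) ∧ (∀ i ∈ X, w i = xv i) ∧
    ∀ p : RVI M, p.1 ∉ X → w p.1 = f p (M.rs w p.1)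

/-- The truth value of a basic counterfactual when the exogenous part is that of `a` and the
response profile is `f`: it counts the solutions of the intervened equations in which the
event holds (there is exactly one solution, see `existsUnique_isSol`). -/
def solVal (X : Finset ν) (xv : Asg Val) (Y : Finset ν) (yv : Asg Val) (a : Asg Val)
    (f : M.Resp) : ℝ :=
  ∑ w : Asg Val, ind (∀ i ∈ Y, w i = yv i) * ind (M.IsSol f X xv a w)

/-- The world `a` is generated by the response profile `f`. -/
def Cons (a : Asg Val) (f : M.Resp) : Prop := ∀ p : RVI M, a p.1 = f p (M.rs a p.1)

/-- The probability of the exogenous part of `a`. -/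
def exoP (a : Asg Val) : ℝ := ∏ i ∈ M.exo, M.cpt i a (a i)

/-- The probability of a response profile when all potential outcomes are independent. -/
def respP (f : M.Resp) : ℝ := ∏ p : RVI M, M.qGH p (f p)

/-- The joint probability of the world `a` and the response profile `f`. -/
def worldP (a : Asg Val) (f : M.Resp) : ℝ := M.exoP a * M.respP f * ind (M.Cons a f)

lemma prod_split (g : ν → ℝ) : ∏ i, g i = (∏ i ∈ M.exo, g i) * ∏ p : RVI M, g p.1 := by
  rw [← Finset.prod_mul_prod_compl M.exo g]
  congr 1
  exact Finset.prod_subtype (p := fun i => i ∉ M.exo) _ (by simp) g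

variable {M}

lemma rs_eq_iff (w a : Asg Val) (i : ν) : M.rs w i = M.rs a i ↔ ∀ j ∈ M.pa i, w j = a j := by
  constructor
  · intro h j hj
    exact congrFun h ⟨j, hj⟩
  · intro h
    funext k
    exact h k.1 k.2

lemma joint_eq (a : Asg Val) : M.joint a = M.exoP a * ∏ p : RVI M, M.cpt p.1 a (a p.1) :=
  M.prod_split _

lemma pdo_refine (a : Asg Val) {X : Finset ν} (hX : ∀ i ∈ X, i ∉ M.exo) (xv w : Asg Val) :
    (M.refine a).pdo X xv w = ind (∀ i ∈ X, w i = xv i) * (M.exoP w *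
      ∏ p : RVI M, if p.1 ∈ X then 1 else (M.refine a).cpt p.1 w (w p.1)) := by
  unfold pdo
  rw [ite_eq_ind]
  congr 1
  have h : ∏ i ∈ Xᶜ, (M.refine a).cpt i w (w i) =
      ∏ i, if i ∈ X then 1 else (M.refine a).cpt i w (w i) := by
    rw [← Finset.prod_mul_prod_compl X]
    rw [Finset.prod_congr rfl (fun i (hi : i ∈ X) => if_pos hi), Finset.prod_const_one, one_mul]
    refine Finset.prod_congr rfl fun i hi => ?_
    rw [if_neg (by simpa using hi)]
  rw [h, M.prod_split]
  congr 1
  refine Finset.prod_congr rfl fun i hi => ?_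
  rw [if_neg (fun h => hX i h hi)]
  simp [refine, hi]

section
variable (hM : M.WF)
include hM

lemma cpt_extendPa (i : ν) (w : Asg Val) (x : Val i) :
    M.cpt i (M.extendPa i (M.rs w i)) x = M.cpt i w x := by
  apply hM.cpt_pa
  intro j hj
  simp [extendPa, hj, rs]

lemma exoP_congr {a w : Asg Val} (h : ∀ i ∈ M.exo, w i = a i) : M.exoP w = M.exoP a := by
  refine Finset.prod_congr rfl fun i hi => ?_
  rw [h i hi]
  apply hM.cpt_pa
  simp [hM.pa_exo i hi]

lemma isSol_unique {f : M.Resp} {X : Finset ν} {xv a w w' : Asg Val}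
    (h : M.IsSol f X xv a w) (h' : M.IsSol f X xv a w') : w = w' := by
  have key : ∀ n i, M.ord i = n → w i = w' i := by
    intro n
    induction n using Nat.strong_induction_on with
    | _ n ih =>
      intro i hi
      by_cases hX : i ∈ X
      · rw [h.2.1 i hX, h'.2.1 i hX]
      by_cases hE : i ∈ M.exo
      · rw [h.1 i hE, h'.1 i hE]
      have e1 := h.2.2 ⟨i, hE⟩ hX
      have e2 := h'.2.2 ⟨i, hE⟩ hX
      have e3 : M.rs w i = M.rs w' i := by
        funext k
        exact ih _ (hi ▸ hM.acyclic i k.1 k.2) k.1 rfl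
      simp only at e1 e2
      rw [e1, e2, e3]
  funext i
  exact key _ i rfl

lemma existsUnique_isSol (f : M.Resp) {X : Finset ν} (hX : ∀ i ∈ X, i ∉ M.exo)
    (xv a : Asg Val) : ∃! w, M.IsSol f X xv a w := by
  let F : ∀ i, (∀ j, M.ord j < M.ord i → Val j) → Val i := fun i rec =>
    if i ∈ X then xv i else if h : i ∈ M.exo then a i
      else f ⟨i, h⟩ (fun k => rec k.1 (hM.acyclic i k.1 k.2))
  let w : Asg Val := (measure M.ord).wf.fix F
  have hw : ∀ i, w i = F i (fun j _ => w j) := fun i => (measure M.ord).wf.fix_eq F i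
  have hs : M.IsSol f X xv a w := by
    refine ⟨fun i hi => ?_, fun i hi => ?_, fun p hp => ?_⟩
    · rw [hw]
      have : i ∉ X := fun h => hX i h hi
      simp [F, this, hi]
    · rw [hw]
      simp [F, hi]
    · rw [hw]
      have hE : p.1 ∉ M.exo := p.2
      simp only [F, hp, if_false, hE, dif_neg, not_false_eq_true]
      rfl
  exact ⟨w, hs, fun w' h' => isSol_unique hM h' hs⟩

lemma sum_isSol (f : M.Resp) {X : Finset ν} (hX : ∀ i ∈ X, i ∉ M.exo) (xv a : Asg Val) :
    ∑ w, ind (M.IsSol f X xv a w) = 1 := by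
  obtain ⟨w, hw, hu⟩ := existsUnique_isSol hM f hX xv a
  rw [Finset.sum_eq_single w]
  · exact ind_true hw
  · intro w' _ hne
    exact ind_false fun h => hne (hu w' h)
  · simp

/-- Consistency: if `f` generates `a` and `a` already satisfies the intervention, then the
counterfactual holds iff it holds in `a`. -/
lemma solVal_of_cons {a : Asg Val} {f : M.Resp} (hc : M.Cons a f) {X : Finset ν}
    {xv : Asg Val} (hX : ∀ i ∈ X, a i = xv i) (Y : Finset ν) (yv : Asg Val) :
    M.solVal X xv Y yv a f = ind (∀ i ∈ Y, a i = yv i) := by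
  have hs : M.IsSol f X xv a a := ⟨fun _ _ => rfl, hX, fun p _ => hc p⟩
  unfold solVal
  rw [Finset.sum_eq_single a]
  · rw [ind_true hs, mul_one]
  · intro w _ hne
    rw [ind_false (fun h => hne (isSol_unique hM h hs)), mul_zero]
  · simp

/-! ### The B-semantics as an average over response profiles -/

lemma cpt_sum_extendPa (i : ν) (κ : M.PaAsg i) : ∑ x, M.cpt i (M.extendPa i κ) x = 1 :=
  hM.cpt_sum _ _

lemma sum_qGH_one (p : RVI M) (a : Asg Val) :
    ∑ g : M.RType p.1, M.qGH p g * ind (a p.1 = g (M.rs a p.1)) = M.cpt p.1 a (a p.1) := by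
  rw [← cpt_extendPa hM p.1 a]
  exact sum_marg_one (fun κ x => M.cpt p.1 (M.extendPa p.1 κ) x)
    (cpt_sum_extendPa hM p.1) (M.rs a p.1) (a p.1)

/-- Conditioning one response function on its value at the actual parents is the same as
refining the conditional probability table. -/
lemma sum_qGH_two (p : RVI M) (a w : Asg Val) :
    ∑ g : M.RType p.1, M.qGH p g * ind (a p.1 = g (M.rs a p.1)) *
        ind (w p.1 = g (M.rs w p.1)) =
      M.cpt p.1 a (a p.1) * (M.refine a).cpt p.1 w (w p.1) := by
  have h := sum_marg_two (fun κ x => M.cpt p.1 (M.extendPa p.1 κ) x)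
    (cpt_sum_extendPa hM p.1) (M.rs a p.1) (M.rs w p.1) (a p.1) (w p.1)
  refine h.trans ?_
  simp only [cpt_extendPa hM, refine, rs_eq_iff]
  have hp : p.1 ∉ M.exo := p.2
  simp only [hp, not_false_eq_true, true_and, ind]

/-- Independence across variables reduces the average over profiles to one response function
at a time. -/
lemma sum_respP (a : Asg Val) (X : Finset ν) (w : Asg Val) :
    ∑ f : M.Resp, M.respP f * ind (M.Cons a f) *
        ind (∀ p : RVI M, p.1 ∉ X → w p.1 = f p (M.rs w p.1)) =
      (∏ p : RVI M, M.cpt p.1 a (a p.1)) *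
        ∏ p : RVI M, if p.1 ∈ X then 1 else (M.refine a).cpt p.1 w (w p.1) := by
  have h : ∀ f : M.Resp, M.respP f * ind (M.Cons a f) *
        ind (∀ p : RVI M, p.1 ∉ X → w p.1 = f p (M.rs w p.1)) =
      ∏ p : RVI M, M.qGH p (f p) * ind (a p.1 = f p (M.rs a p.1)) *
        ind (p.1 ∉ X → w p.1 = f p (M.rs w p.1)) := by
    intro f
    rw [Finset.prod_mul_distrib, Finset.prod_mul_distrib, ← ind_forall, ← ind_forall]
    rfl
  simp only [h]
  rw [sum_pi_prod (fun (p : RVI M) (g : M.RType p.1) =>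
    M.qGH p g * ind (a p.1 = g (M.rs a p.1)) * ind (p.1 ∉ X → w p.1 = g (M.rs w p.1))),
    ← Finset.prod_mul_distrib]
  refine Finset.prod_congr rfl fun p _ => ?_
  by_cases hp : p.1 ∈ X
  · simp only [hp, not_true_eq_false, false_imp_iff, if_true, mul_one]
    rw [← sum_qGH_one hM p a]
    simp [ind]
  · simp only [hp, not_false_eq_true, true_imp_iff, if_false]
    exact sum_qGH_two hM p a w

lemma joint_eq_sum (a : Asg Val) : M.joint a = ∑ f : M.Resp, M.worldP a f := by
  have h := sum_respP hM a univ a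
  simp only [Finset.mem_univ, if_true, Finset.prod_const_one, mul_one, not_true_eq_false,
    false_imp_iff, implies_true] at h
  rw [joint_eq, ← h, Finset.mul_sum]
  refine Finset.sum_congr rfl fun f _ => ?_
  simp [worldP, ind]

lemma worldP_nonneg (a : Asg Val) (f : M.Resp) : 0 ≤ M.worldP a f := by
  refine mul_nonneg (mul_nonneg ?_ ?_) (ind_nonneg _)
  · exact Finset.prod_nonneg fun i _ => hM.cpt_nonneg _ _ _
  · exact Finset.prod_nonneg fun p _ => Finset.prod_nonneg fun κ _ => hM.cpt_nonneg _ _ _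

lemma worldP_eq_zero {a : Asg Val} (h : M.joint a = 0) (f : M.Resp) : M.worldP a f = 0 := by
  rw [joint_eq_sum hM, Finset.sum_eq_zero_iff_of_nonneg (fun f _ => worldP_nonneg hM a f)] at h
  exact h f (Finset.mem_univ f)

/-- The unnormalised interventional expectation of `ψ` in the refined model, multiplied by the
probability of the endogenous part of `a`, is the average of the values of `ψ` at the solutions
of the intervened equations. -/
lemma sum_pdo_refine (a : Asg Val) {X : Finset ν} (hX : ∀ i ∈ X, i ∉ M.exo) (xv : Asg Val)
    (ψ : Asg Val → ℝ) :
    (∑ w, ψ w * (ind (∀ i ∈ M.exo, w i = a i) * (M.refine a).pdo X xv w)) *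
        ∏ p : RVI M, M.cpt p.1 a (a p.1) =
      ∑ f : M.Resp, (∑ w, ψ w * ind (M.IsSol f X xv a w)) * M.worldP a f := by
  simp only [Finset.sum_mul]
  rw [Finset.sum_comm]
  refine Finset.sum_congr rfl fun w _ => ?_
  by_cases hw : ∀ i ∈ M.exo, w i = a i
  · have h := sum_respP hM a X w
    rw [pdo_refine a hX, exoP_congr hM hw, ind_true hw]
    calc _ = ψ w * ind (∀ i ∈ X, w i = xv i) * M.exoP a * ((∏ p : RVI M, M.cpt p.1 a (a p.1)) *
        ∏ p : RVI M, if p.1 ∈ X then 1 else (M.refine a).cpt p.1 w (w p.1)) := by ring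
      _ = _ := by
        rw [← h, Finset.mul_sum]
        refine Finset.sum_congr rfl fun f _ => ?_
        simp only [IsSol, ind_and, worldP, ind_true hw]
        ring
  · simp [IsSol, ind_and, ind_false hw]

/-- The B-probability of a basic counterfactual in the world `a` is its average over the
response profiles generating `a`. -/
lemma pbBasic_mul_joint (a : Asg Val) {X : Finset ν} (hX : ∀ i ∈ X, i ∉ M.exo)
    (xv : Asg Val) (Y : Finset ν) (yv : Asg Val) :
    M.pbBasic a X xv Y yv * M.joint a =
      ∑ f : M.Resp, M.solVal X xv Y yv a f * M.worldP a f := by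
  by_cases hj : M.joint a = 0
  · simp [hj, worldP_eq_zero hM hj]
  have hnum := sum_pdo_refine hM a hX xv (fun w => ind (∀ i ∈ Y, w i = yv i))
  have hden := sum_pdo_refine hM a hX xv (fun _ => 1)
  simp only [one_mul, sum_isSol hM _ hX, ← joint_eq_sum hM] at hden
  rw [joint_eq] at hden
  rw [joint_eq] at hj
  have hE := right_ne_zero_of_mul hj
  have hX0 := left_ne_zero_of_mul hj
  have hden' := mul_right_cancel₀ hE hden
  have e : M.pbBasic a X xv Y yv =
      (∑ w, ind (∀ i ∈ Y, w i = yv i) *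
        (ind (∀ i ∈ M.exo, w i = a i) * (M.refine a).pdo X xv w)) / M.exoP a := by
    rw [← hden']
    unfold pbBasic cfBasic
    congr 1
    · refine Finset.sum_congr rfl fun w _ => ?_
      rw [ite_eq_ind, ind_and]
      simp only [refine]
      ring
    · refine Finset.sum_congr rfl fun w _ => ?_
      rw [ite_eq_ind]
      rfl
  unfold solVal
  rw [e, ← hnum, joint_eq]
  field_simp

lemma isCanonicalDist_qGH : M.IsCanonicalDist M.qGH := by
  refine ⟨fun p f => Finset.prod_nonneg fun κ _ => hM.cpt_nonneg _ _ _, fun p => ?_,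
    fun p κ x => ?_⟩
  · have := sum_pi_prod (fun (κ : M.PaAsg p.1) x => M.cpt p.1 (M.extendPa p.1 κ) x)
    simp only [hM.cpt_sum, Finset.prod_const_one] at this
    exact this
  · have h := sum_marg_one (fun κ x => M.cpt p.1 (M.extendPa p.1 κ) x)
      (cpt_sum_extendPa hM p.1) κ x
    refine h.symm.trans ?_
    rw [Finset.sum_filter]
    refine Finset.sum_congr rfl fun f _ => ?_
    rw [ite_eq_ind, mul_comm, eq_comm (a := f κ)]
    rfl

end

/-! ### Extensions by response profiles -/

/-- `N` is an extension of `M` by exogenous variables which encode, through `Φ`, a response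
profile with the law `respP`. Both the PO-SCM and the GH-SCM are of this form. -/
structure RespExt (M : CM ν Val) {β : Type} {B : β → Type} [Fintype β] [∀ b, Fintype (B b)]
    (N : CM (ν ⊕ β) (SumVal Val B)) (Φ : Asg B ≃ M.Resp) : Prop where
  exo_eq : N.exo = M.exo.image Sum.inl ∪ univ.image Sum.inr
  cpt_exo : ∀ j ∈ M.exo, ∀ (w : Asg (SumVal Val B)) (x : Val j),
    N.cpt (Sum.inl j) w x = M.cpt j (fun k => w (Sum.inl k)) x
  cpt_endo : ∀ (p : RVI M) (w : Asg (SumVal Val B)) (x : Val p.1),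
    N.cpt (Sum.inl p.1) w x =
      ind (x = Φ (fun b => w (Sum.inr b)) p (M.rs (fun k => w (Sum.inl k)) p.1))
  prod_cpt : ∀ w : Asg (SumVal Val B),
    ∏ b, N.cpt (Sum.inr b) w (w (Sum.inr b)) = M.respP (Φ fun b => w (Sum.inr b))

namespace RespExt

variable {β : Type} {B : β → Type} [Fintype β] [∀ b, Fintype (B b)] [∀ b, Nonempty (B b)]
  {N : CM (ν ⊕ β) (SumVal Val B)} {Φ : Asg B ≃ M.Resp}

/-- The assignment on the extended signature with the two given parts. -/
def glue (a : Asg Val) (b : Asg B) : Asg (SumVal Val B) := fun i =>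
  match i with
  | .inl j => a j
  | .inr k => b k

lemma glue_bijective : Function.Bijective
    (fun z : Asg Val × Asg B => (glue z.1 z.2 : Asg (SumVal Val B))) := by
  constructor
  · rintro ⟨a, b⟩ ⟨a', b'⟩ h
    ext i
    · exact congrFun h (Sum.inl i)
    · exact congrFun h (Sum.inr i)
  · intro w
    refine ⟨(fun i => w (Sum.inl i), fun i => w (Sum.inr i)), ?_⟩
    funext i
    cases i <;> rfl

lemma sum_glue (T : Asg (SumVal Val B) → ℝ) : ∑ w, T w = ∑ a, ∑ b, T (glue a b) := by
  rw [← Fintype.sum_prod_type', ← glue_bijective.sum_comp]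

variable (hN : RespExt M N Φ)
include hN

lemma joint_glue (a : Asg Val) (b : Asg B) : N.joint (glue a b) = M.worldP a (Φ b) := by
  unfold joint worldP Cons
  rw [Fintype.prod_sum_type, hN.prod_cpt, M.prod_split, ind_forall]
  have h1 : ∏ i ∈ M.exo, N.cpt (Sum.inl i) (glue a b) (glue a b (Sum.inl i)) = M.exoP a :=
    Finset.prod_congr rfl fun i hi => hN.cpt_exo i hi _ _
  have h2 : ∏ p : RVI M, N.cpt (Sum.inl p.1) (glue a b) (glue a b (Sum.inl p.1)) =
      ∏ p : RVI M, ind (a p.1 = Φ b p (M.rs a p.1)) :=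
    Finset.prod_congr rfl fun p _ => hN.cpt_endo p _ _
  rw [h1, h2]
  simp only [glue]
  ring

lemma pdo_glue {X : Finset ν} (hX : ∀ i ∈ X, i ∉ M.exo) (xv a : Asg Val) (b : Asg B) :
    N.pdo (X.image Sum.inl) (liftAsg xv) (glue a b) =
      ind (∀ i ∈ X, a i = xv i) * (M.exoP a * M.respP (Φ b) *
        ind (∀ p : RVI M, p.1 ∉ X → a p.1 = Φ b p (M.rs a p.1))) := by
  unfold pdo
  rw [ite_eq_ind]
  have h0 : (∀ i ∈ X.image Sum.inl, (glue a b : Asg (SumVal Val B)) i = liftAsg xv i) ↔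
      ∀ i ∈ X, a i = xv i := by
    simp only [Finset.forall_mem_image]
    rfl
  rw [h0]
  congr 1
  have h : ∏ i ∈ (X.image Sum.inl)ᶜ, N.cpt i (glue a b) (glue a b i) =
      ∏ i : ν ⊕ β, if i ∈ X.image Sum.inl then 1 else N.cpt i (glue a b) (glue a b i) := by
    rw [← Finset.prod_mul_prod_compl (X.image Sum.inl)]
    rw [Finset.prod_congr rfl (fun i (hi : i ∈ X.image Sum.inl) => if_pos hi),
      Finset.prod_const_one, one_mul]
    refine Finset.prod_congr rfl fun i hi => ?_
    rw [if_neg (by simpa using hi)]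
  refine (Finset.prod_congr (by ext; simp) fun _ _ => rfl).trans (h.trans ?_)
  rw [Fintype.prod_sum_type, M.prod_split, ind_forall]
  have h1 : ∏ i ∈ M.exo, (if (Sum.inl i : ν ⊕ β) ∈ X.image Sum.inl then 1 else
      N.cpt (Sum.inl i) (glue a b) (glue a b (Sum.inl i))) = M.exoP a := by
    refine Finset.prod_congr rfl fun i hi => ?_
    have : i ∉ X := fun h => hX i h hi
    rw [if_neg (by simpa using this)]
    exact hN.cpt_exo i hi _ _
  have h2 : ∏ p : RVI M, (if (Sum.inl p.1 : ν ⊕ β) ∈ X.image Sum.inl then 1 else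
      N.cpt (Sum.inl p.1) (glue a b) (glue a b (Sum.inl p.1))) =
      ∏ p : RVI M, ind (p.1 ∉ X → a p.1 = Φ b p (M.rs a p.1)) := by
    refine Finset.prod_congr rfl fun p _ => ?_
    rw [ind_imp]
    by_cases hp : p.1 ∈ X
    · simp [hp]
    · rw [if_neg (by simpa using hp), if_pos hp]
      exact hN.cpt_endo p _ _
  have h3 : ∏ k : β, (if (Sum.inr k : ν ⊕ β) ∈ X.image Sum.inl then 1 else
      N.cpt (Sum.inr k) (glue a b) (glue a b (Sum.inr k))) = M.respP (Φ b) := by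
    refine Eq.trans ?_ (hN.prod_cpt (glue a b))
    refine Finset.prod_congr rfl fun p _ => ?_
    rw [if_neg (by simp)]
  rw [h1, h2, h3]
  ring

lemma sum_pdo (hM : M.WF) {X : Finset ν} (hX : ∀ i ∈ X, i ∉ M.exo) (xv a : Asg Val)
    (b : Asg B) (ψ : Asg (SumVal Val B) → ℝ) :
    ∑ w, ψ w * (ind (∀ i ∈ N.exo, w i = glue a b i) *
        N.pdo (X.image Sum.inl) (liftAsg xv) w) =
      M.exoP a * M.respP (Φ b) *
        ∑ w, ψ (glue w b) * ind (M.IsSol (Φ b) X xv a w) := by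
  rw [sum_glue, Finset.mul_sum]
  refine Finset.sum_congr rfl fun w _ => ?_
  have hex : ∀ b' : Asg B, (∀ i ∈ N.exo, (glue w b' : Asg (SumVal Val B)) i = glue a b i) ↔
      (∀ i ∈ M.exo, w i = a i) ∧ b' = b := by
    intro b'
    rw [hN.exo_eq]
    constructor
    · intro h
      refine ⟨fun i hi => h (Sum.inl i) (by simp [hi]), ?_⟩
      funext k
      exact h (Sum.inr k) (by simp)
    · rintro ⟨h, rfl⟩ i hi
      cases i with
      | inl j => exact h j (by simpa using hi)
      | inr k => rfl
  rw [Finset.sum_eq_single b]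
  · rw [hex b, hN.pdo_glue hX]
    by_cases hw : ∀ i ∈ M.exo, w i = a i
    · rw [exoP_congr hM hw]
      simp only [IsSol, ind_and, ind_true hw, ind_true trivial]
      ring
    · simp [IsSol, ind_and, ind_false hw]
  · intro b' _ hb
    rw [hex b', ind_and, ind_false hb]
    ring
  · simp

/-- In the extension, a basic counterfactual is deterministic given all exogenous variables.
The quotient is not simplified since it is `0 / 0` on exogenous values of probability zero. -/
lemma cfBasic_glue (hM : M.WF) {X : Finset ν} (hX : ∀ i ∈ X, i ∉ M.exo) (xv : Asg Val)
    (Y : Finset ν) (yv a : Asg Val) (b : Asg B) :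
    N.cfBasic (X.image Sum.inl) (liftAsg xv) (Y.image Sum.inl) (liftAsg yv) (glue a b) =
      M.exoP a * M.respP (Φ b) * M.solVal X xv Y yv a (Φ b) /
        (M.exoP a * M.respP (Φ b)) := by
  have hden := hN.sum_pdo hM hX xv a b (fun _ => 1)
  have hnum := hN.sum_pdo hM hX xv a b
    (fun w => ind (∀ i ∈ Y.image Sum.inl, w i = liftAsg yv i))
  simp only [one_mul, sum_isSol hM _ hX, mul_one] at hden
  have hY : ∀ w : Asg Val, (∀ i ∈ Y.image Sum.inl, (glue w b : Asg (SumVal Val B)) i =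
      liftAsg yv i) ↔ ∀ i ∈ Y, w i = yv i := by
    intro w
    simp only [Finset.forall_mem_image]
    rfl
  simp only [hY] at hnum
  unfold cfBasic
  congr 1
  · refine Eq.trans ?_ hnum
    refine Finset.sum_congr (by ext; simp) fun w _ => ?_
    rw [ite_eq_ind, ind_and]
    ring
  · refine Eq.trans ?_ hden
    refine Finset.sum_congr (by ext; simp) fun w _ => ?_
    rw [ite_eq_ind]

/-- Every quantity computed in the extension is an average over worlds and response profiles,
with a weight that depends on `M` only. -/
lemma sum_cf (hM : M.WF) (evs : List (CFEvent ν Val))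
    (hevs : ∀ e ∈ evs, ∀ i ∈ e.X, i ∉ M.exo) (φ : Asg Val → ℝ) :
    ∑ w : Asg (SumVal Val B), φ (fun i => w (Sum.inl i)) *
        ((evs.map liftCFEvent).map fun e => N.cfBasic e.X e.xv e.Y e.yv w).prod * N.joint w =
      ∑ a, ∑ f : M.Resp, φ a *
        (evs.map fun e => M.solVal e.X e.xv e.Y e.yv a f).prod * M.worldP a f := by
  rw [sum_glue]
  refine Finset.sum_congr rfl fun a _ => ?_
  rw [← Φ.sum_comp]
  refine Finset.sum_congr rfl fun b _ => ?_
  rw [hN.joint_glue]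
  by_cases hc : M.exoP a * M.respP (Φ b) = 0
  · simp [worldP, hc]
  · congr 2
    rw [List.map_map]
    congr 1
    refine List.map_congr_left fun e he => ?_
    refine (hN.cfBasic_glue hM (hevs e he) e.xv e.Y e.yv a b).trans ?_
    exact mul_div_cancel_left₀ _ hc

lemma extProb_eq (hM : M.WF) (evs : List (CFEvent ν Val))
    (hevs : ∀ e ∈ evs, ∀ i ∈ e.X, i ∉ M.exo) :
    extProb N evs = ∑ a, ∑ f : M.Resp,
      (evs.map fun e => M.solVal e.X e.xv e.Y e.yv a f).prod * M.worldP a f := by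
  have h := hN.sum_cf hM evs hevs (fun _ => 1)
  simp only [one_mul] at h
  refine Eq.trans ?_ h
  exact Finset.sum_congr (by ext; simp) fun _ _ => rfl

lemma sum_joint (hM : M.WF) (φ : Asg Val → ℝ) :
    ∑ w : Asg (SumVal Val B), φ (fun i => w (Sum.inl i)) * N.joint w =
      ∑ a, φ a * M.joint a := by
  have h := hN.sum_cf hM [] (by simp) φ
  simp only [List.map_nil, List.prod_nil, mul_one] at h
  rw [h]
  simp only [joint_eq_sum hM, Finset.mul_sum]

lemma extProbCond_eq (hM : M.WF) (evs : List (CFEvent ν Val))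
    (hevs : ∀ e ∈ evs, ∀ i ∈ e.X, i ∉ M.exo) (Z : Finset ν) (zv : Asg Val) :
    extProbCond N evs Z zv = (∑ a, ∑ f : M.Resp, ind (∀ i ∈ Z, a i = zv i) *
      (evs.map fun e => M.solVal e.X e.xv e.Y e.yv a f).prod * M.worldP a f) /
      ∑ a, ind (∀ i ∈ Z, a i = zv i) * M.joint a := by
  have hZ : ∀ w : Asg (SumVal Val B), (∀ i ∈ Z.image Sum.inl, w i = liftAsg zv i) ↔
      ∀ i ∈ Z, w (Sum.inl i) = zv i := by
    intro w
    simp only [Finset.forall_mem_image]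
    rfl
  rw [← hN.sum_cf hM evs hevs (fun a => ind (∀ i ∈ Z, a i = zv i)),
    ← hN.sum_joint hM (fun a => ind (∀ i ∈ Z, a i = zv i))]
  unfold extProbCond cfProbCond
  simp only [ite_eq_ind, hZ]
  congr 1 <;> exact Finset.sum_congr (by ext; simp) fun _ _ => rfl

lemma extBasicCond_eq (hM : M.WF) (a : Asg Val) {X : Finset ν} (hX : ∀ i ∈ X, i ∉ M.exo)
    (xv : Asg Val) (Y : Finset ν) (yv : Asg Val) :
    extBasicCond N a X xv Y yv =
      (∑ f : M.Resp, M.solVal X xv Y yv a f * M.worldP a f) / M.joint a := by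
  have h1 := hN.sum_cf hM [⟨X, xv, Y, yv⟩] (by simpa using hX) (fun w => ind (∀ i, w i = a i))
  have h2 := hN.sum_joint hM (fun w => ind (∀ i, w i = a i))
  have hne : ∀ w : Asg Val, w ≠ a → ind (∀ i, w i = a i) = 0 :=
    fun w hw => ind_false fun h => hw (funext h)
  rw [Finset.sum_eq_single a (fun w _ hw => by simp [hne w hw]) (by simp),
    ind_true (fun _ => rfl)] at h2
  rw [Finset.sum_eq_single a (fun w _ hw => by simp [hne w hw]) (by simp),
    ind_true (fun _ => rfl)] at h1
  simp only [List.map_cons, List.map_nil, List.prod_cons, List.prod_nil, mul_one,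
    one_mul] at h1 h2
  rw [← h1, ← h2]
  unfold extBasicCond
  simp only [ite_eq_ind, mul_assoc]
  rfl

end RespExt

variable (M)

/-! ### The GH-SCM and the PO-SCM -/

lemma respExt_canon : RespExt M (M.canonSCM M.qGH) (Equiv.refl M.Resp) where
  exo_eq := rfl
  cpt_exo := by
    intro j hj w x
    simp [canonSCM, hj]
  cpt_endo := by
    intro p w x
    have hp : p.1 ∉ M.exo := p.2
    simp only [canonSCM, hp, dif_neg, not_false_eq_true]
    rfl
  prod_cpt := fun w => rfl

/-- A family of potential outcomes is a response profile. -/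
def poEquiv : Asg (POB M) ≃ M.Resp where
  toFun b p κ := b ⟨p, κ⟩
  invFun f p := f p.1 p.2
  left_inv _ := rfl
  right_inv _ := rfl

lemma respExt_MN : RespExt M M.MN M.poEquiv where
  exo_eq := rfl
  cpt_exo := by
    intro j hj w x
    simp [MN, hj]
  cpt_endo := by
    intro p w x
    have hp : p.1 ∉ M.exo := p.2
    simp only [MN, hp, dif_neg, not_false_eq_true]
    rfl
  prod_cpt := by
    intro w
    exact Fintype.prod_sigma (fun p : (Σ i : {i : ν // i ∉ M.exo}, M.PaAsg i.1) =>
      M.cpt p.1.1 (M.extendPa p.1.1 p.2) (w (Sum.inr p)))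

variable {M}

/-! ### Conditional and joint B-probabilities -/

lemma pbProbCond_eq (hM : M.WF) {X : Finset ν} (hX : ∀ i ∈ X, i ∉ M.exo)
    (xv : Asg Val) (Y : Finset ν) (yv : Asg Val) (Z : Finset ν) (zv : Asg Val) :
    M.pbProbCond [⟨X, xv, Y, yv⟩] Z zv = (∑ a, ∑ f : M.Resp, ind (∀ i ∈ Z, a i = zv i) *
      ([(⟨X, xv, Y, yv⟩ : CFEvent ν Val)].map
        fun e => M.solVal e.X e.xv e.Y e.yv a f).prod * M.worldP a f) /
      ∑ a, ind (∀ i ∈ Z, a i = zv i) * M.joint a := by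
  unfold pbProbCond
  simp only [ite_eq_ind, List.map_cons, List.map_nil, List.prod_cons, List.prod_nil, mul_one,
    mul_assoc, pbBasic_mul_joint hM _ hX, Finset.mul_sum]

/-- Consistency of the B-semantics. The factor `joint a` is needed since a basic B-probability
may be `0 / 0` on worlds of probability zero. -/
lemma pbBasic_of_agree (hM : M.WF) {a : Asg Val} {X : Finset ν}
    (hX : ∀ i ∈ X, i ∉ M.exo) {xv : Asg Val} (ha : ∀ i ∈ X, a i = xv i) (Y : Finset ν)
    (yv : Asg Val) (c : ℝ) :
    M.pbBasic a X xv Y yv * c * M.joint a =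
      ind (∀ i ∈ Y, a i = yv i) * c * M.joint a := by
  have h : M.pbBasic a X xv Y yv * M.joint a = ind (∀ i ∈ Y, a i = yv i) * M.joint a := by
    rw [pbBasic_mul_joint hM a hX, joint_eq_sum hM, Finset.mul_sum]
    refine Finset.sum_congr rfl fun f _ => ?_
    by_cases hc : M.Cons a f
    · rw [solVal_of_cons hM hc ha]
    · simp [worldP, ind_false hc]
  linear_combination c * h

/-- For two counterfactuals one of whose antecedents is actual, the product rule of the
B-semantics is the average over response profiles. -/
lemma pbBasic_mul_pbBasic (hM : M.WF) {a : Asg Val} {X X' : Finset ν}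
    (hX : ∀ i ∈ X, i ∉ M.exo) (hX' : ∀ i ∈ X', i ∉ M.exo) {xv : Asg Val} (xv' : Asg Val)
    (ha : ∀ i ∈ X, a i = xv i) (Y Y' : Finset ν) (yv yv' : Asg Val) :
    M.pbBasic a X xv Y yv * M.pbBasic a X' xv' Y' yv' * M.joint a =
      ∑ f : M.Resp, M.solVal X xv Y yv a f * M.solVal X' xv' Y' yv' a f * M.worldP a f := by
  rw [pbBasic_of_agree hM hX ha, mul_assoc, pbBasic_mul_joint hM a hX', Finset.mul_sum]
  refine Finset.sum_congr rfl fun f _ => ?_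
  by_cases hc : M.Cons a f
  · rw [solVal_of_cons hM hc ha, mul_assoc]
  · simp [worldP, ind_false hc]

end CM

/-- **Corollary.** Given a causal model `M` (with `M^IC` the independent canonical SCM,
i.e. the canonical SCM — given by the response-variable distribution `qic` — whose
counterfactual probabilities equal those of the PO-SCM `M^N`):
(i) `P^GH(y_x, …, z_w) = P^N(y_x, …, z_w) = P^IC(y_x, …, z_w)`;
(ii) for all `(u, v)` with `P_M(u, v) > 0`,
  `P^B(y_x | u, v) = P^GH(y_x | u, v) = P^N(y_x | u, v) = P^IC(y_x | u, v)`;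
(iii) for all `z'` with `P_M(z') > 0`,
  `P^B(y_x | z') = P^GH(y_x | z') = P^N(y_x | z') = P^IC(y_x | z')`;
(iv) for any binary `X, Y ∈ V`:
  `PN^B = PN^GH = PN^N = PN^IC`, `PS^B = PS^GH = PS^N = PS^IC`, and
  `PNS^B = PNS^GH = PNS^N = PNS^IC`. -/
theorem all_semantics_agree
    {ν : Type} {Val : ν → Type} [Fintype ν] [∀ i, Fintype (Val i)] [∀ i, Nonempty (Val i)]
    (M : CM ν Val) (hM : M.WF) :
    ∃ qic : (p : CM.RVI M) → CM.RType M p.1 → ℝ,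
      M.IsCanonicalDist qic ∧
      -- `M^IC` is the independent canonical SCM: its counterfactual probabilities
      -- equal those of the PO-SCM `M^N`
      (∀ evs : List (CFEvent ν Val),
        (∀ e ∈ evs, (∀ i ∈ e.X, i ∉ M.exo) ∧ (∀ i ∈ e.Y, i ∉ M.exo)) →
        extProb (M.canonSCM qic) evs = M.pnProb evs) ∧
      -- (i)
      (∀ evs : List (CFEvent ν Val),
        (∀ e ∈ evs, (∀ i ∈ e.X, i ∉ M.exo) ∧ (∀ i ∈ e.Y, i ∉ M.exo)) →
        extProb (M.canonSCM M.qGH) evs = M.pnProb evs ∧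
        M.pnProb evs = extProb (M.canonSCM qic) evs) ∧
      -- (ii)
      (∀ (a : Asg Val), 0 < M.joint a →
        ∀ (X : Finset ν), (∀ i ∈ X, i ∉ M.exo) → ∀ (xv : Asg Val),
        ∀ (Y : Finset ν), (∀ i ∈ Y, i ∉ M.exo) → ∀ (yv : Asg Val),
        M.pbBasic a X xv Y yv = extBasicCond (M.canonSCM M.qGH) a X xv Y yv ∧
        extBasicCond (M.canonSCM M.qGH) a X xv Y yv = M.pnBasicCond a X xv Y yv ∧
        M.pnBasicCond a X xv Y yv = extBasicCond (M.canonSCM qic) a X xv Y yv) ∧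
      -- (iii)
      (∀ (X : Finset ν), (∀ i ∈ X, i ∉ M.exo) → ∀ (xv : Asg Val),
        ∀ (Y : Finset ν), (∀ i ∈ Y, i ∉ M.exo) → ∀ (yv : Asg Val),
        ∀ (Z : Finset ν), (∀ i ∈ Z, i ∉ M.exo) → ∀ (zv : Asg Val),
        (0 < ∑ w : Asg Val, if ∀ i ∈ Z, w i = zv i then M.joint w else 0) →
        M.pbProbCond [⟨X, xv, Y, yv⟩] Z zv
            = extProbCond (M.canonSCM M.qGH) [⟨X, xv, Y, yv⟩] Z zv ∧
        extProbCond (M.canonSCM M.qGH) [⟨X, xv, Y, yv⟩] Z zv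
            = M.pnProbCond [⟨X, xv, Y, yv⟩] Z zv ∧
        M.pnProbCond [⟨X, xv, Y, yv⟩] Z zv
            = extProbCond (M.canonSCM qic) [⟨X, xv, Y, yv⟩] Z zv) ∧
      -- (iv)
      (∀ (X Y : ν), X ∉ M.exo → Y ∉ M.exo → X ≠ Y →
        ∀ (x0 x1 : Val X), x0 ≠ x1 → (∀ v : Val X, v = x0 ∨ v = x1) →
        ∀ (y0 y1 : Val Y), y0 ≠ y1 → (∀ v : Val Y, v = y0 ∨ v = y1) →
        -- PN
        (M.pbProbCond [⟨{X}, Function.update (dfltAsg Val) X x0, {Y}, Function.update (dfltAsg Val) Y y0⟩]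
              {X, Y} (Function.update (Function.update (dfltAsg Val) X x1) Y y1)
            = extProbCond (M.canonSCM M.qGH)
              [⟨{X}, Function.update (dfltAsg Val) X x0, {Y}, Function.update (dfltAsg Val) Y y0⟩]
              {X, Y} (Function.update (Function.update (dfltAsg Val) X x1) Y y1) ∧
          extProbCond (M.canonSCM M.qGH)
              [⟨{X}, Function.update (dfltAsg Val) X x0, {Y}, Function.update (dfltAsg Val) Y y0⟩]
              {X, Y} (Function.update (Function.update (dfltAsg Val) X x1) Y y1)
            = M.pnProbCond
              [⟨{X}, Function.update (dfltAsg Val) X x0, {Y}, Function.update (dfltAsg Val) Y y0⟩]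
              {X, Y} (Function.update (Function.update (dfltAsg Val) X x1) Y y1) ∧
          M.pnProbCond
              [⟨{X}, Function.update (dfltAsg Val) X x0, {Y}, Function.update (dfltAsg Val) Y y0⟩]
              {X, Y} (Function.update (Function.update (dfltAsg Val) X x1) Y y1)
            = extProbCond (M.canonSCM qic)
              [⟨{X}, Function.update (dfltAsg Val) X x0, {Y}, Function.update (dfltAsg Val) Y y0⟩]
              {X, Y} (Function.update (Function.update (dfltAsg Val) X x1) Y y1)) ∧
        -- PS
        (M.pbProbCond [⟨{X}, Function.update (dfltAsg Val) X x1, {Y}, Function.update (dfltAsg Val) Y y1⟩]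
              {X, Y} (Function.update (Function.update (dfltAsg Val) X x0) Y y0)
            = extProbCond (M.canonSCM M.qGH)
              [⟨{X}, Function.update (dfltAsg Val) X x1, {Y}, Function.update (dfltAsg Val) Y y1⟩]
              {X, Y} (Function.update (Function.update (dfltAsg Val) X x0) Y y0) ∧
          extProbCond (M.canonSCM M.qGH)
              [⟨{X}, Function.update (dfltAsg Val) X x1, {Y}, Function.update (dfltAsg Val) Y y1⟩]
              {X, Y} (Function.update (Function.update (dfltAsg Val) X x0) Y y0)
            = M.pnProbCond
              [⟨{X}, Function.update (dfltAsg Val) X x1, {Y}, Function.update (dfltAsg Val) Y y1⟩]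
              {X, Y} (Function.update (Function.update (dfltAsg Val) X x0) Y y0) ∧
          M.pnProbCond
              [⟨{X}, Function.update (dfltAsg Val) X x1, {Y}, Function.update (dfltAsg Val) Y y1⟩]
              {X, Y} (Function.update (Function.update (dfltAsg Val) X x0) Y y0)
            = extProbCond (M.canonSCM qic)
              [⟨{X}, Function.update (dfltAsg Val) X x1, {Y}, Function.update (dfltAsg Val) Y y1⟩]
              {X, Y} (Function.update (Function.update (dfltAsg Val) X x0) Y y0)) ∧
        -- PNS
        (M.pbProb [⟨{X}, Function.update (dfltAsg Val) X x1, {Y}, Function.update (dfltAsg Val) Y y1⟩,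
                   ⟨{X}, Function.update (dfltAsg Val) X x0, {Y}, Function.update (dfltAsg Val) Y y0⟩]
            = extProb (M.canonSCM M.qGH)
              [⟨{X}, Function.update (dfltAsg Val) X x1, {Y}, Function.update (dfltAsg Val) Y y1⟩,
               ⟨{X}, Function.update (dfltAsg Val) X x0, {Y}, Function.update (dfltAsg Val) Y y0⟩] ∧
          extProb (M.canonSCM M.qGH)
              [⟨{X}, Function.update (dfltAsg Val) X x1, {Y}, Function.update (dfltAsg Val) Y y1⟩,
               ⟨{X}, Function.update (dfltAsg Val) X x0, {Y}, Function.update (dfltAsg Val) Y y0⟩]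
            = M.pnProb
              [⟨{X}, Function.update (dfltAsg Val) X x1, {Y}, Function.update (dfltAsg Val) Y y1⟩,
               ⟨{X}, Function.update (dfltAsg Val) X x0, {Y}, Function.update (dfltAsg Val) Y y0⟩] ∧
          M.pnProb
              [⟨{X}, Function.update (dfltAsg Val) X x1, {Y}, Function.update (dfltAsg Val) Y y1⟩,
               ⟨{X}, Function.update (dfltAsg Val) X x0, {Y}, Function.update (dfltAsg Val) Y y0⟩]
            = extProb (M.canonSCM qic)
              [⟨{X}, Function.update (dfltAsg Val) X x1, {Y}, Function.update (dfltAsg Val) Y y1⟩,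
               ⟨{X}, Function.update (dfltAsg Val) X x0, {Y}, Function.update (dfltAsg Val) Y y0⟩])) := by
  have hC := CM.respExt_canon M
  have hP := CM.respExt_MN M
  have cond : ∀ (X : Finset ν), (∀ i ∈ X, i ∉ M.exo) → ∀ (xv : Asg Val) (Y : Finset ν)
      (yv : Asg Val) (Z : Finset ν) (zv : Asg Val),
      M.pbProbCond [⟨X, xv, Y, yv⟩] Z zv
            = extProbCond (M.canonSCM M.qGH) [⟨X, xv, Y, yv⟩] Z zv ∧
        extProbCond (M.canonSCM M.qGH) [⟨X, xv, Y, yv⟩] Z zv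
            = M.pnProbCond [⟨X, xv, Y, yv⟩] Z zv ∧
        M.pnProbCond [⟨X, xv, Y, yv⟩] Z zv
            = extProbCond (M.canonSCM M.qGH) [⟨X, xv, Y, yv⟩] Z zv := by
    intro X hX xv Y yv Z zv
    have e0 := CM.pbProbCond_eq hM hX xv Y yv Z zv
    have e1 := hC.extProbCond_eq hM [⟨X, xv, Y, yv⟩] (by simpa using hX) Z zv
    have e2 : M.pnProbCond [⟨X, xv, Y, yv⟩] Z zv = _ :=
      hP.extProbCond_eq hM [⟨X, xv, Y, yv⟩] (by simpa using hX) Z zv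
    exact ⟨e0.trans e1.symm, e1.trans e2.symm, e2.trans e1.symm⟩
  have joint : ∀ evs : List (CFEvent ν Val), (∀ e ∈ evs, ∀ i ∈ e.X, i ∉ M.exo) →
      extProb (M.canonSCM M.qGH) evs = M.pnProb evs := by
    intro evs h
    exact (hC.extProb_eq hM evs h).trans (hP.extProb_eq hM evs h).symm
  refine ⟨M.qGH, CM.isCanonicalDist_qGH hM, fun evs h => joint evs fun e he => (h e he).1,
    fun evs h => ⟨joint evs fun e he => (h e he).1, (joint evs fun e he => (h e he).1).symm⟩,
    ?_, fun X hX xv Y _ yv Z _ zv _ => cond X hX xv Y yv Z zv, ?_⟩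
  · intro a ha X hX xv Y _ yv
    have e0 := (eq_div_iff ha.ne').2 (CM.pbBasic_mul_joint hM a hX xv Y yv)
    have e1 := hC.extBasicCond_eq hM a hX xv Y yv
    have e2 : M.pnBasicCond a X xv Y yv = _ := hP.extBasicCond_eq hM a hX xv Y yv
    exact ⟨e0.trans e1.symm, e1.trans e2.symm, e2.trans e1.symm⟩
  · intro X Y hX _ _ x0 x1 _ hx y0 y1 _ _
    have hX' : ∀ i ∈ ({X} : Finset ν), i ∉ M.exo := by simpa using hX
    refine ⟨cond _ hX' _ _ _ _ _, cond _ hX' _ _ _ _ _, ?_, joint _ (by simpa using hX),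
      (joint _ (by simpa using hX)).symm⟩
    rw [hC.extProb_eq hM _ (by simpa using hX)]
    unfold CM.pbProb
    refine Finset.sum_congr rfl fun a _ => ?_
    simp only [List.map_cons, List.map_nil, List.prod_cons, List.prod_nil, mul_one]
    -- Since `X` is binary, one of the two antecedents is actual in every world `a`.
    rcases hx (a X) with h0 | h1
    · rw [mul_comm (M.pbBasic a _ _ _ _),
        CM.pbBasic_mul_pbBasic hM hX' hX' _ (by simpa using h0)]
      exact Finset.sum_congr rfl fun f _ => by rw [mul_comm (M.solVal _ _ _ _ a f)]
    · exact CM.pbBasic_mul_pbBasic hM hX' hX' _ (by simpa using h1) _ _ _ _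

end
end
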